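/- Let d ≥ 3 and consider on ℝ^{d+1} (coordinates (t, x) with x ∈ ℝ^d) the linearized isentropic Euler operator 𝓐 acting on smooth functions z = (ρ, m, M, q) : ℝ^{d+1} → ℝ × ℝ^d × S_0^d × ℝ by 𝓐z = (∂_t m + div M + ∇q, ∂_t ρ + div m), where S_0^d denotes symmetric trace-free d×d matrices. Set Ñ := (1/4)(d−1)²d². Then there exists a linear homogeneous partial differential operator 𝓑 of order two with constant coefficients, mapping smooth functions ℝ^{d+1} → ℝ^{Ñ} to smooth functions ℝ^{d+1} → ℝ × ℝ^d × S_0^d × ℝ, such that the kernel of 𝓐 on C^∞(ℝ^{d+1}) equals the image of 𝓑 on C^∞(ℝ^{d+1}): every smooth z with 𝓐z = 0 is of the form z = 𝓑ψ for some smooth ψ : ℝ^{d+1} → ℝ^{Ñ}, and conversely 𝓐(𝓑ψ) = 0 for every smooth ψ. -/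

import Mathlib

open MeasureTheory Metric Filter Topology

/-- Partial derivative of a scalar function on `ℝ^{d+1}` in the `a`-th coordinate
direction. -/
noncomputable def pdv {n : ℕ} (a : Fin n) (f : EuclideanSpace ℝ (Fin n) → ℝ)
    (x : EuclideanSpace ℝ (Fin n)) : ℝ :=
  fderiv ℝ f x (EuclideanSpace.single a 1)

/-- A scalar second-order homogeneous constant-coefficient operator
`ψ ↦ ∑_{a,b} ∑_s C_{ab}^s ∂_a ∂_b ψ_s` applied to `ψ : ℝ^n → ℝ^{Nt}`. -/
noncomputable def applyOp2 {n Nt : ℕ} (C : Fin n → Fin n → Fin Nt → ℝ)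
    (ψ : EuclideanSpace ℝ (Fin n) → Fin Nt → ℝ) (x : EuclideanSpace ℝ (Fin n)) : ℝ :=
  ∑ a : Fin n, ∑ b : Fin n, ∑ s : Fin Nt,
    C a b s * pdv b (fun y => pdv a (fun z => ψ z s) y) x

/-- The linearized isentropic Euler system `𝓐z = 0` on `ℝ^{d+1}` (coordinates `(x, t)`,
`t` as the last coordinate) for `z = (ρ, m, M, q)`:
`∂_t m + div M + ∇q = 0` and `∂_t ρ + div m = 0`. -/
def EulerLin {d : ℕ} (ρ : EuclideanSpace ℝ (Fin (d + 1)) → ℝ)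
    (m : EuclideanSpace ℝ (Fin (d + 1)) → Fin d → ℝ)
    (M : EuclideanSpace ℝ (Fin (d + 1)) → Fin d → Fin d → ℝ)
    (q : EuclideanSpace ℝ (Fin (d + 1)) → ℝ) : Prop :=
  (∀ x, ∀ j : Fin d,
    pdv (Fin.last d) (fun y => m y j) x +
      (∑ i : Fin d, pdv i.castSucc (fun y => M y j i) x) +
        pdv j.castSucc q x = 0) ∧
  (∀ x, pdv (Fin.last d) ρ x + ∑ i : Fin d, pdv i.castSucc (fun y => m y i) x = 0)

/-!
Writing `T = ∂_t` and `U = M + q I`, the system says that the symmetric matrix field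
`[[U, m], [mᵀ, ρ]]` is divergence-free in space-time. Every symmetric `S : ℝ^{d+1} → ℝ^{d × d}`
yields a solution `U = T T S`, `m = -T div S`, `ρ = div div S`. Conversely, given a solution, match
the blocks one after the other. Solve `T T S = U`. The error in `m` is then in the kernel of `T`;
since each `∂_i` is surjective on `ker T`, it is removed by adding to `S` a diagonal matrix which
`T T` annihilates. The remaining error in `ρ` is again in `ker T` and is removed by a single
diagonal entry in `ker T`. Hence the `d (d + 1) / 2` entries of `S` suffice as potentials, and
`d (d + 1) / 2 ≤ Ñ` for `d ≥ 3`.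
-/

section ParametricIntegral

universe u

variable {a b : ℝ}

theorem hasFDerivAt_intervalIntegral_of_contDiff {E F : Type*} [NormedAddCommGroup E]
    [NormedSpace ℝ E] [NormedAddCommGroup F] [NormedSpace ℝ F] {g : E × ℝ → F}
    (hg : ContDiff ℝ 1 g) (x₀ : E) :
    HasFDerivAt (fun x => ∫ s in a..b, g (x, s))
      (∫ s in a..b, fderiv ℝ g (x₀, s) ∘L ContinuousLinearMap.inl ℝ E ℝ) x₀ := by
  let g' : E × ℝ → E →L[ℝ] F := fun p => fderiv ℝ g p ∘L ContinuousLinearMap.inl ℝ E ℝ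
  have hg' : Continuous g' := (hg.continuous_fderiv one_ne_zero).clm_comp continuous_const
  have hslice (x : E) : Continuous fun s : ℝ => (x, s) := by fun_prop
  obtain ⟨B, hB⟩ := (isCompact_uIcc (a := a) (b := b)).exists_bound_of_continuousOn
    (hg'.comp (hslice x₀)).continuousOn
  have hbound : ∀ᶠ x in 𝓝 x₀, ∀ s ∈ Set.uIcc a b, ‖g' (x, s)‖ ≤ B + 1 :=
    isCompact_uIcc.eventually_forall_of_forall_eventually fun s hs =>
      (hg'.norm.tendsto (x₀, s)).eventually_le_const ((hB s hs).trans_lt (lt_add_one B))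
  refine intervalIntegral.hasFDerivAt_integral_of_dominated_of_fderiv_le
    (F' := fun x s => g' (x, s)) (bound := fun _ => B + 1) hbound
    (.of_forall fun x => (hg.continuous.comp (hslice x)).aestronglyMeasurable)
    ((hg.continuous.comp (hslice x₀)).intervalIntegrable a b)
    (hg'.comp (hslice x₀)).aestronglyMeasurable
    (.of_forall fun s hs x hx => hx s (Set.uIoc_subset_uIcc hs)) intervalIntegrable_const
    (.of_forall fun s _ x _ => ?_)
  exact (hg.differentiable one_ne_zero (x, s)).hasFDerivAt.comp x (hasFDerivAt_prodMk_left x s)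

theorem contDiff_intervalIntegral {E F : Type u} [NormedAddCommGroup E] [NormedSpace ℝ E]
    [NormedAddCommGroup F] [NormedSpace ℝ F] {n : ℕ∞} {g : E × ℝ → F} (hg : ContDiff ℝ n g) :
    ContDiff ℝ n fun x => ∫ s in a..b, g (x, s) := by
  rw [contDiff_iff_forall_nat_le] at hg ⊢
  intro k hk
  replace hg := hg k hk
  clear hk
  induction k generalizing F with
  | zero =>
    exact contDiff_zero.2
      (intervalIntegral.continuous_parametric_intervalIntegral_of_continuous'
        (f := fun x s => g (x, s)) hg.continuous a b)
  | succ k ih =>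
    have hg' : ContDiff ℝ k fun p => fderiv ℝ g p ∘L ContinuousLinearMap.inl ℝ E ℝ :=
      (hg.fderiv_right le_rfl).clm_comp contDiff_const
    exact contDiff_succ_iff_hasFDerivAt.2
      ⟨_, ih hg', hasFDerivAt_intervalIntegral_of_contDiff (hg.of_le (by simp))⟩

end ParametricIntegral

section LinePrimitive

universe u

variable {E F : Type u} [NormedAddCommGroup E] [NormedSpace ℝ E] [NormedAddCommGroup F]
  [NormedSpace ℝ F] {f : E → F} (ℓ : E →L[ℝ] ℝ) (v : E)

theorem fderiv_apply_eq_zero_iff_forall_add_smul_eq (hf : Differentiable ℝ f) (w : E) :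
    (∀ x, fderiv ℝ f x w = 0) ↔ ∀ x (τ : ℝ), f (x + τ • w) = f x := by
  refine ⟨fun h x τ => ?_, fun h x => ?_⟩
  · have hline (σ : ℝ) : HasDerivAt (fun τ : ℝ => f (x + τ • w)) 0 σ := by
      have hσ : HasDerivAt (fun τ : ℝ => x + τ • w) w σ := by
        simpa using ((hasDerivAt_id σ).smul_const w).const_add x
      exact h (x + σ • w) ▸ (hf _).hasFDerivAt.comp_hasDerivAt σ hσ
    simpa using is_const_of_deriv_eq_zero (fun σ => (hline σ).differentiableAt)
      (fun σ => (hline σ).deriv) τ 0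
  · have hconst : HasLineDerivAt ℝ f 0 x w := by
      simpa only [HasLineDerivAt, h] using hasDerivAt_const (0 : ℝ) (f x)
    exact ((hf x).hasFDerivAt.hasLineDerivAt w).unique hconst

/-- The primitive of `f` along the lines with direction `v` that vanishes on the hyperplane
`ℓ = 0`, for a linear functional `ℓ` with `ℓ v = 1`: the point `x + (σ - ℓ x) • v` is the one at
height `ℓ = σ` on the line through `x`. -/
noncomputable def linePrimitive (f : E → F) (x : E) : F :=
  ∫ σ in (0 : ℝ)..ℓ x, f (x + (σ - ℓ x) • v)

theorem linePrimitive_eq_smul_integral (f : E → F) (x : E) :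
    linePrimitive ℓ v f x = ℓ x • ∫ s in (0 : ℝ)..1, f (x + (ℓ x * s - ℓ x) • v) := by
  simp [linePrimitive,
    intervalIntegral.smul_integral_comp_mul_left (fun σ => f (x + (σ - ℓ x) • v))]

theorem contDiff_linePrimitive {n : ℕ∞} (hf : ContDiff ℝ n f) :
    ContDiff ℝ n (linePrimitive ℓ v f) := by
  have hintegral : ContDiff ℝ n fun x => ∫ s in (0 : ℝ)..1, f (x + (ℓ x * s - ℓ x) • v) :=
    contDiff_intervalIntegral (g := fun p : E × ℝ => f (p.1 + (ℓ p.1 * p.2 - ℓ p.1) • v))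
      (hf.comp (by fun_prop))
  rw [funext (linePrimitive_eq_smul_integral ℓ v f)]
  exact ℓ.contDiff.smul hintegral

theorem hasLineDerivAt_linePrimitive [CompleteSpace F] {ℓ : E →L[ℝ] ℝ} {v : E} (hℓ : ℓ v = 1)
    (hf : Continuous f) (x : E) : HasLineDerivAt ℝ (linePrimitive ℓ v f) (f x) x v := by
  have hline (τ : ℝ) : linePrimitive ℓ v f (x + τ • v) =
      ∫ σ in (0 : ℝ)..(ℓ x + τ), f (x + (σ - ℓ x) • v) := by
    simp only [linePrimitive, map_add, map_smul, hℓ, smul_eq_mul, mul_one]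
    refine intervalIntegral.integral_congr fun σ _ => congrArg f ?_
    module
  have hcont : Continuous fun σ : ℝ => f (x + (σ - ℓ x) • v) := hf.comp (by fun_prop)
  simpa [HasLineDerivAt, hline] using
    (hcont.integral_hasStrictDerivAt 0 (ℓ x + 0)).hasDerivAt.comp_const_add (ℓ x) 0

theorem linePrimitive_add_smul {ℓ : E →L[ℝ] ℝ} {w : E} (hw : ℓ w = 0)
    (hf : ∀ x (τ : ℝ), f (x + τ • w) = f x) (x : E) (τ : ℝ) :
    linePrimitive ℓ v f (x + τ • w) = linePrimitive ℓ v f x := by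
  simp [linePrimitive, hw, add_right_comm x (τ • w), hf]

end LinePrimitive

section SmoothFunctions

variable {n : ℕ}

theorem contDiff_pdv (a : Fin n) {f : EuclideanSpace ℝ (Fin n) → ℝ}
    (hf : ContDiff ℝ (⊤ : ℕ∞) f) : ContDiff ℝ (⊤ : ℕ∞) (pdv a f) :=
  (hf.fderiv_right (m := (⊤ : ℕ∞)) le_rfl).clm_apply contDiff_const

theorem pdv_comm (a b : Fin n) {f : EuclideanSpace ℝ (Fin n) → ℝ} (hf : ContDiff ℝ 2 f) :
    pdv a (pdv b f) = pdv b (pdv a f) := by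
  have hdiff : Differentiable ℝ (fderiv ℝ f) :=
    (hf.fderiv_right (m := 1) one_add_one_eq_two.le).differentiable one_ne_zero
  have hpdv (a b : Fin n) (x) : pdv a (pdv b f) x =
      fderiv ℝ (fderiv ℝ f) x (EuclideanSpace.single a 1) (EuclideanSpace.single b 1) := by
    unfold pdv
    simp [fderiv_clm_apply (hdiff x) (differentiableAt_const _)]
  funext x
  rw [hpdv, hpdv]
  exact (hf.contDiffAt.isSymmSndFDerivAt (by simp)).eq _ _

/-- The space of smooth real functions on `ℝ^n`. -/
def smoothFunctions (n : ℕ) : Submodule ℝ (EuclideanSpace ℝ (Fin n) → ℝ) where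
  carrier := {f | ContDiff ℝ (⊤ : ℕ∞) f}
  add_mem' hf hg := Set.mem_ofPred.2 ((Set.mem_ofPred.1 hf).add (Set.mem_ofPred.1 hg))
  zero_mem' := Set.mem_ofPred.2 contDiff_const
  smul_mem' c _ hf := Set.mem_ofPred.2 ((Set.mem_ofPred.1 hf).const_smul c)

namespace smoothFunctions

theorem mem_iff {f : EuclideanSpace ℝ (Fin n) → ℝ} :
    f ∈ smoothFunctions n ↔ ContDiff ℝ (⊤ : ℕ∞) f := Set.mem_ofPred

theorem contDiff (f : smoothFunctions n) : ContDiff ℝ (⊤ : ℕ∞) f.1 := mem_iff.1 f.2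

theorem differentiable (f : smoothFunctions n) : Differentiable ℝ f.1 :=
  (contDiff f).differentiable (by simp)

theorem exists_family_eq {ι : Type*} [Fintype ι] {f : EuclideanSpace ℝ (Fin n) → ι → ℝ}
    (hf : ContDiff ℝ (⊤ : ℕ∞) f) : ∃ F : ι → smoothFunctions n, f = fun x i => (F i).1 x :=
  ⟨fun i => ⟨fun x => f x i, mem_iff.2 (contDiff_pi.1 hf i)⟩, rfl⟩

theorem exists_matrix_eq {ι κ : Type*} [Fintype ι] [Fintype κ]
    {f : EuclideanSpace ℝ (Fin n) → ι → κ → ℝ} (hf : ContDiff ℝ (⊤ : ℕ∞) f) :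
    ∃ F : Matrix ι κ (smoothFunctions n), f = fun x i j => (F i j).1 x :=
  ⟨fun i j => ⟨fun x => f x i j, mem_iff.2 (contDiff_pi.1 (contDiff_pi.1 hf i) j)⟩, rfl⟩

end smoothFunctions

/-- The partial derivative as a linear endomorphism of the space of smooth functions. -/
noncomputable def smoothPdv (a : Fin n) : Module.End ℝ (smoothFunctions n) where
  toFun f := ⟨pdv a f.1, smoothFunctions.mem_iff.2 (contDiff_pdv a (smoothFunctions.contDiff f))⟩
  map_add' f g := by
    ext x
    simp [pdv, fderiv_add (smoothFunctions.differentiable f x)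
      (smoothFunctions.differentiable g x)]
  map_smul' c f := by
    ext x
    simp [pdv, fderiv_const_smul (smoothFunctions.differentiable f x)]

theorem commute_smoothPdv (a b : Fin n) : Commute (smoothPdv a) (smoothPdv b) :=
  LinearMap.ext fun f => Subtype.ext
    (pdv_comm a b ((smoothFunctions.contDiff f).of_le (WithTop.coe_le_coe.2 le_top)))

/-- The primitive in the `a`-th coordinate that vanishes on the hyperplane `x a = 0`. -/
noncomputable def smoothPrimitive (a : Fin n) (f : smoothFunctions n) : smoothFunctions n :=
  ⟨linePrimitive (EuclideanSpace.proj a) (EuclideanSpace.single a 1) f.1,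
    smoothFunctions.mem_iff.2 (contDiff_linePrimitive _ _ (smoothFunctions.contDiff f))⟩

theorem smoothPdv_smoothPrimitive (a : Fin n) (f : smoothFunctions n) :
    smoothPdv a (smoothPrimitive a f) = f := by
  ext x
  exact ((smoothFunctions.differentiable _ x).hasFDerivAt.hasLineDerivAt _).unique
    (hasLineDerivAt_linePrimitive (by simp) (smoothFunctions.contDiff f).continuous x)

theorem mem_ker_smoothPdv_iff {a : Fin n} {f : smoothFunctions n} :
    f ∈ LinearMap.ker (smoothPdv a) ↔
      ∀ x (τ : ℝ), f.1 (x + τ • EuclideanSpace.single a 1) = f.1 x := by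
  rw [← fderiv_apply_eq_zero_iff_forall_add_smul_eq (smoothFunctions.differentiable f)]
  simp [Subtype.ext_iff, funext_iff, smoothPdv, pdv]

theorem smoothPdv_surjective (a : Fin n) : Function.Surjective (smoothPdv a) := fun f =>
  ⟨smoothPrimitive a f, smoothPdv_smoothPrimitive a f⟩

theorem smoothPdv_surjOn_ker {a b : Fin n} (hab : a ≠ b) :
    Set.SurjOn (smoothPdv a) (LinearMap.ker (smoothPdv b)) (LinearMap.ker (smoothPdv b)) :=
  fun f hf => ⟨smoothPrimitive a f, mem_ker_smoothPdv_iff.2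
    (linePrimitive_add_smul _ (by simp [hab]) (mem_ker_smoothPdv_iff.1 hf)),
    smoothPdv_smoothPrimitive a f⟩

end SmoothFunctions

section SymmetricPotential

variable {R E ι κ : Type*} [Ring R] [AddCommGroup E] [Module R E]
  (T : Module.End R E) (D : ι → Module.End R E)

/-- The `xx`-block `∂_t ∂_t S` of the divergence-free field with potential `S`. -/
def potentialFlux : Matrix ι ι E →ₗ[R] Matrix ι ι E := T.mapMatrix ∘ₗ T.mapMatrix

variable {T} in
theorem isSymm_potentialFlux {S : Matrix ι ι E} (hS : S.IsSymm) : (potentialFlux T S).IsSymm :=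
  (hS.map T).map T

variable {T} in
theorem exists_isSymm_potentialFlux_eq (hT : Function.Surjective T) {U : Matrix ι ι E}
    (hU : U.IsSymm) : ∃ S : Matrix ι ι E, S.IsSymm ∧ potentialFlux T S = U := by
  obtain ⟨P, hP⟩ := (hT.comp hT).hasRightInverse
  exact ⟨U.map P, hU.map P, Matrix.ext fun i j => hP (U i j)⟩

variable [Fintype ι]

/-- The divergence `∑ j, D j (v j)` of a vector field with entries in `E`, where `D j` plays the
role of the `j`-th partial derivative. -/
def divergence : (ι → E) →ₗ[R] E := ∑ j, D j ∘ₗ LinearMap.proj j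

theorem divergence_apply (v : ι → E) : divergence D v = ∑ j, D j (v j) := by
  simp [divergence]

theorem divergence_single [DecidableEq ι] (i : ι) (f : E) :
    divergence D (Pi.single i f) = D i f := by
  rw [divergence_apply, Fintype.sum_eq_single i fun j hj => by simp [hj], Pi.single_eq_same]

/-- The row-wise divergence of a matrix field. -/
def rowDivergence : Matrix κ ι E →ₗ[R] κ → E where
  toFun S i := divergence D (S i)
  map_add' S S' := funext fun i => map_add _ (S i) (S' i)
  map_smul' c S := funext fun i => map_smul _ c (S i)

theorem rowDivergence_apply (S : Matrix κ ι E) (i : κ) :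
    rowDivergence D S i = ∑ j, D j (S i j) := divergence_apply D (S i)

theorem rowDivergence_diagonal [DecidableEq ι] (A : ι → E) (i : ι) :
    rowDivergence D (Matrix.diagonal A) i = D i (A i) := by
  rw [rowDivergence_apply, Fintype.sum_eq_single i fun j hj => by
    rw [Matrix.diagonal_apply_ne' _ hj, map_zero], Matrix.diagonal_apply_eq]

theorem rowDivergence_single [DecidableEq κ] [DecidableEq ι] (i : κ) (j : ι) (f : E) :
    rowDivergence D (Matrix.single i j f) = Pi.single i (D j f) := by
  ext k
  obtain rfl | hk := eq_or_ne i k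
  · rw [rowDivergence_apply, Fintype.sum_eq_single j fun l hl => by simp [hl.symm]]
    simp
  · simp [rowDivergence_apply, hk]

variable {T D}

theorem divergence_compLeft (hTD : ∀ i, Commute T (D i)) (v : ι → E) :
    divergence D (T.compLeft ι v) = T (divergence D v) := by
  simp only [divergence_apply, map_sum]
  exact Finset.sum_congr rfl fun i _ => (LinearMap.congr_fun (hTD i) (v i)).symm

theorem rowDivergence_mapMatrix (hTD : ∀ i, Commute T (D i)) (S : Matrix κ ι E) :
    rowDivergence D (T.mapMatrix S) = T.compLeft κ (rowDivergence D S) :=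
  funext fun i => divergence_compLeft hTD (S i)

variable (T D)

/-- The block form of `div_{(t,x)} [[U, m], [mᵀ, ρ]] = 0`, with `T = ∂_t` and `D i = ∂_{x_i}`. -/
def IsDivergenceFree (ρ : E) (m : ι → E) (U : Matrix ι ι E) : Prop :=
  T.compLeft ι m + rowDivergence D U = 0 ∧ T ρ + divergence D m = 0

/-- The `tt`-block `div div S` of the divergence-free field with potential `S`. -/
def potentialDensity : Matrix ι ι E →ₗ[R] E := divergence D ∘ₗ rowDivergence D

/-- The `tx`-block `-∂_t div S` of the divergence-free field with potential `S`. -/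
def potentialMomentum : Matrix ι ι E →ₗ[R] ι → E := -(T.compLeft ι ∘ₗ rowDivergence D)

variable {T D}

theorem isDivergenceFree_potential (hTD : ∀ i, Commute T (D i)) (S : Matrix ι ι E) :
    IsDivergenceFree T D (potentialDensity D S) (potentialMomentum T D S) (potentialFlux T S) := by
  simp only [IsDivergenceFree, potentialDensity, potentialMomentum, potentialFlux,
    LinearMap.comp_apply, LinearMap.neg_apply, map_neg, rowDivergence_mapMatrix hTD,
    divergence_compLeft hTD, neg_add_cancel, add_neg_cancel, and_self]

theorem exists_diagonal_potentialMomentum_eq [DecidableEq ι] (hTD : ∀ i, Commute T (D i))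
    (hT : Function.Surjective T)
    (hD : ∀ i, Set.SurjOn (D i) (LinearMap.ker T) (LinearMap.ker T)) {g : ι → E}
    (hg : ∀ i, T (g i) = 0) :
    ∃ A : ι → E, potentialFlux T (Matrix.diagonal A) = 0 ∧
      potentialMomentum T D (Matrix.diagonal A) = g := by
  choose G hG hDG using fun i => hD i (LinearMap.mem_ker.2 (hg i))
  choose A hA using fun i => hT (-G i)
  refine ⟨A, ?_, ?_⟩
  · have hTT (i : ι) : T (T (A i)) = 0 := by rw [hA, map_neg, LinearMap.mem_ker.1 (hG i), neg_zero]
    simp [potentialFlux, Matrix.diagonal_map, hTT]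
  · ext i
    have hcomm : T (D i (A i)) = D i (T (A i)) := LinearMap.congr_fun (hTD i) (A i)
    simp [potentialMomentum, rowDivergence_diagonal, hcomm, hA, hDG]

theorem exists_single_potentialDensity_eq [DecidableEq ι] (hTD : ∀ i, Commute T (D i)) {i : ι}
    (hD : Set.SurjOn (D i) (LinearMap.ker T) (LinearMap.ker T)) {h : E} (hh : T h = 0) :
    ∃ B : E, potentialFlux T (Matrix.single i i B) = 0 ∧
      potentialMomentum T D (Matrix.single i i B) = 0 ∧
      potentialDensity D (Matrix.single i i B) = h := by
  obtain ⟨B, hB, hDB⟩ := (hD.comp hD) (LinearMap.mem_ker.2 hh)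
  have hTB : T.mapMatrix (Matrix.single i i B) = 0 := by
    simp [Matrix.map_single, LinearMap.mem_ker.1 hB]
  refine ⟨B, ?_, ?_, ?_⟩
  · simp only [potentialFlux, LinearMap.comp_apply, hTB, map_zero]
  · simp only [potentialMomentum, LinearMap.neg_apply, LinearMap.comp_apply,
      ← rowDivergence_mapMatrix hTD, hTB, map_zero, neg_zero]
  · simpa [potentialDensity, rowDivergence_single, divergence_single] using hDB

theorem IsDivergenceFree.exists_potential [Nonempty ι] (hTD : ∀ i, Commute T (D i))
    (hT : Function.Surjective T)
    (hD : ∀ i, Set.SurjOn (D i) (LinearMap.ker T) (LinearMap.ker T)) {ρ : E} {m : ι → E}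
    {U : Matrix ι ι E} (hU : U.IsSymm) (hdiv : IsDivergenceFree T D ρ m U) :
    ∃ S : Matrix ι ι E, S.IsSymm ∧ potentialDensity D S = ρ ∧ potentialMomentum T D S = m ∧
      potentialFlux T S = U := by
  classical
  obtain ⟨V, hVsymm, hVU⟩ := exists_isSymm_potentialFlux_eq hT hU
  have hV := isDivergenceFree_potential hTD V
  have hTm : T.compLeft ι (m - potentialMomentum T D V) = 0 := by
    rw [map_sub, eq_neg_of_add_eq_zero_left hdiv.1, eq_neg_of_add_eq_zero_left hV.1, hVU, sub_self]
  obtain ⟨A, hAU, hAm⟩ := exists_diagonal_potentialMomentum_eq hTD hT hD (congrFun hTm)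
  have hWm : potentialMomentum T D (V + Matrix.diagonal A) = m := by
    rw [map_add, hAm, add_sub_cancel]
  have hW := isDivergenceFree_potential hTD (V + Matrix.diagonal A)
  have hTρ : T (ρ - potentialDensity D (V + Matrix.diagonal A)) = 0 := by
    rw [map_sub, eq_neg_of_add_eq_zero_left hdiv.2, eq_neg_of_add_eq_zero_left hW.2, hWm, sub_self]
  let i₀ : ι := Classical.arbitrary ι
  obtain ⟨B, hBU, hBm, hBρ⟩ := exists_single_potentialDensity_eq hTD (hD i₀) hTρ
  refine ⟨V + Matrix.diagonal A + Matrix.single i₀ i₀ B,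
    (hVsymm.add (Matrix.isSymm_diagonal A)).add (Matrix.transpose_single i₀ i₀ B), ?_, ?_, ?_⟩
  · rw [map_add, hBρ, add_sub_cancel]
  · rw [map_add, hBm, hWm, add_zero]
  · rw [map_add, map_add, hBU, hAU, hVU, add_zero, add_zero]

end SymmetricPotential

section Deviator

variable (K : Type*) {E ι : Type*} [DivisionRing K] [AddCommGroup E] [Module K E] [Fintype ι]

/-- The pressure of a stress matrix: its normalised trace. -/
def meanTrace (U : Matrix ι ι E) : E := (Fintype.card ι : K)⁻¹ • U.trace

variable [DecidableEq ι]

/-- The trace-free part of a matrix. -/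
def deviator (U : Matrix ι ι E) : Matrix ι ι E := U - Matrix.diagonal fun _ => meanTrace K U

variable {K}

theorem deviator_add_diagonal_meanTrace (U : Matrix ι ι E) :
    deviator K U + Matrix.diagonal (fun _ => meanTrace K U) = U :=
  sub_add_cancel _ _

theorem isSymm_deviator {U : Matrix ι ι E} (hU : U.IsSymm) : (deviator K U).IsSymm :=
  hU.sub (Matrix.isSymm_diagonal _)

theorem trace_diagonal_const (q : E) :
    (Matrix.diagonal fun _ : ι => q).trace = (Fintype.card ι : K) • q := by
  simp [Matrix.trace_diagonal, Nat.cast_smul_eq_nsmul]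

variable [CharZero K] [Nonempty ι]

theorem trace_deviator (U : Matrix ι ι E) : (deviator K U).trace = 0 := by
  rw [deviator, Matrix.trace_sub, trace_diagonal_const (K := K), meanTrace,
    smul_inv_smul₀ (Nat.cast_ne_zero.2 Fintype.card_ne_zero), sub_self]

theorem meanTrace_add_diagonal {M : Matrix ι ι E} (hM : M.trace = 0) (q : E) :
    meanTrace K (M + Matrix.diagonal fun _ => q) = q := by
  rw [meanTrace, Matrix.trace_add, hM, zero_add, trace_diagonal_const (K := K),
    inv_smul_smul₀ (Nat.cast_ne_zero.2 Fintype.card_ne_zero)]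

theorem deviator_add_diagonal {M : Matrix ι ι E} (hM : M.trace = 0) (q : E) :
    deviator K (M + Matrix.diagonal fun _ => q) = M := by
  rw [deviator, meanTrace_add_diagonal hM, add_sub_cancel_right]

end Deviator

section SymmetricMatrix

variable {E ι κ : Type*} (e : Sym2 ι → κ)

/-- The symmetric matrix whose `(i, j)` entry is the component of `Ψ` with label `e s(i, j)`. -/
def symmMatrix (Ψ : κ → E) : Matrix ι ι E := Matrix.of fun i j => Ψ (e s(i, j))

theorem isSymm_symmMatrix (Ψ : κ → E) : (symmMatrix e Ψ).IsSymm :=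
  Matrix.ext fun _ _ => congrArg (Ψ ∘ e) Sym2.eq_swap

theorem exists_symmMatrix_eq [Zero E] {e : Sym2 ι → κ} (he : Function.Injective e)
    {S : Matrix ι ι E} (hS : S.IsSymm) : ∃ Ψ, symmMatrix e Ψ = S :=
  ⟨Function.extend e (Sym2.lift ⟨S, fun i j => hS.apply j i⟩) 0,
    Matrix.ext fun i j => he.extend_apply _ _ s(i, j)⟩

end SymmetricMatrix

section SecondOrderOperators

variable {n Nt : ℕ}

theorem smoothFunctions.sum_apply {ι : Type*} [Fintype ι] (f : ι → smoothFunctions n)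
    (x : EuclideanSpace ℝ (Fin n)) : (∑ i, f i).1 x = ∑ i, (f i).1 x := by
  simp

/-- The scalar homogeneous second-order operators with constant coefficients on smooth functions
`ℝ^n → ℝ^{Nt}`. -/
def secondOrderOps (n Nt : ℕ) :
    Submodule ℝ ((Fin Nt → smoothFunctions n) → smoothFunctions n) where
  carrier := {L | ∃ C, ∀ Ψ x, (L Ψ).1 x = applyOp2 C (fun y s => (Ψ s).1 y) x}
  add_mem' := by
    rintro L L' ⟨C, hC⟩ ⟨C', hC'⟩
    exact ⟨C + C', fun Ψ x => by simp [hC, hC', applyOp2, add_mul, Finset.sum_add_distrib]⟩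
  zero_mem' := ⟨0, fun Ψ x => by simp [applyOp2]⟩
  smul_mem' := by
    rintro c L ⟨C, hC⟩
    exact ⟨c • C, fun Ψ x => by simp [hC, applyOp2, Finset.mul_sum, mul_assoc]⟩

theorem mem_secondOrderOps {L : (Fin Nt → smoothFunctions n) → smoothFunctions n} :
    L ∈ secondOrderOps n Nt ↔
      ∃ C, ∀ Ψ x, (L Ψ).1 x = applyOp2 C (fun y s => (Ψ s).1 y) x := Set.mem_ofPred

theorem smoothPdv_smoothPdv_mem_secondOrderOps (a b : Fin n) (s : Fin Nt) :
    (fun Ψ => smoothPdv a (smoothPdv b (Ψ s))) ∈ secondOrderOps n Nt := by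
  refine mem_secondOrderOps.2
    ⟨fun b' a' s' => if b' = b ∧ a' = a ∧ s' = s then 1 else 0, fun Ψ x => ?_⟩
  simp only [applyOp2, ite_and, ite_mul, one_mul, zero_mul, Finset.sum_ite_eq', Finset.mem_univ,
    if_true, Finset.sum_ite_irrel, Finset.sum_const_zero]
  rfl

end SecondOrderOperators

section Euler

variable {d Nt : ℕ}

/-- The time derivative on `ℝ^{d+1}`; time is the last coordinate. -/
noncomputable abbrev timeDeriv (d : ℕ) : Module.End ℝ (smoothFunctions (d + 1)) :=
  smoothPdv (Fin.last d)

/-- The spatial derivatives on `ℝ^{d+1}`. -/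
noncomputable abbrev spaceDeriv (d : ℕ) (i : Fin d) : Module.End ℝ (smoothFunctions (d + 1)) :=
  smoothPdv i.castSucc

theorem eulerLin_iff_isDivergenceFree (ρ : smoothFunctions (d + 1))
    (m : Fin d → smoothFunctions (d + 1)) (M : Matrix (Fin d) (Fin d) (smoothFunctions (d + 1)))
    (q : smoothFunctions (d + 1)) :
    EulerLin ρ.1 (fun x j => (m j).1 x) (fun x i j => (M i j).1 x) q.1 ↔
      IsDivergenceFree (timeDeriv d) (spaceDeriv d) ρ m (M + Matrix.diagonal fun _ => q) := by
  simp only [EulerLin, IsDivergenceFree, map_add, funext_iff, Pi.add_apply, rowDivergence_diagonal]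
  simp only [rowDivergence_apply, divergence_apply, Subtype.ext_iff, funext_iff,
    Submodule.coe_add, Pi.add_apply, ← add_assoc, smoothFunctions.sum_apply]
  exact and_congr_left' forall_comm

theorem eulerLin_potential (S : Matrix (Fin d) (Fin d) (smoothFunctions (d + 1))) :
    EulerLin (potentialDensity (spaceDeriv d) S).1
      (fun x j => (potentialMomentum (timeDeriv d) (spaceDeriv d) S j).1 x)
      (fun x i j => (deviator ℝ (potentialFlux (timeDeriv d) S) i j).1 x)
      (meanTrace ℝ (potentialFlux (timeDeriv d) S)).1 := by
  rw [eulerLin_iff_isDivergenceFree, deviator_add_diagonal_meanTrace]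
  exact isDivergenceFree_potential (fun _ => commute_smoothPdv _ _) S

theorem EulerLin.exists_potential [NeZero d] {ρ : smoothFunctions (d + 1)}
    {m : Fin d → smoothFunctions (d + 1)} {M : Matrix (Fin d) (Fin d) (smoothFunctions (d + 1))}
    {q : smoothFunctions (d + 1)} (hM : M.IsSymm) (htr : M.trace = 0)
    (hE : EulerLin ρ.1 (fun x j => (m j).1 x) (fun x i j => (M i j).1 x) q.1) :
    ∃ S : Matrix (Fin d) (Fin d) (smoothFunctions (d + 1)), S.IsSymm ∧
      potentialDensity (spaceDeriv d) S = ρ ∧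
      potentialMomentum (timeDeriv d) (spaceDeriv d) S = m ∧
      deviator ℝ (potentialFlux (timeDeriv d) S) = M ∧
      meanTrace ℝ (potentialFlux (timeDeriv d) S) = q := by
  obtain ⟨S, hS, hρ, hm, hU⟩ := ((eulerLin_iff_isDivergenceFree ρ m M q).1 hE).exists_potential
    (fun _ => commute_smoothPdv _ _) (smoothPdv_surjective _)
    (fun i => smoothPdv_surjOn_ker i.castSucc_ne_last) (hM.add (Matrix.isSymm_diagonal _))
  refine ⟨S, hS, hρ, hm, ?_, ?_⟩
  · rw [hU, deviator_add_diagonal htr]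
  · rw [hU, meanTrace_add_diagonal htr]

variable (e : Sym2 (Fin d) → Fin Nt)

theorem potentialDensity_mem_secondOrderOps :
    (fun Ψ => potentialDensity (spaceDeriv d) (symmMatrix e Ψ)) ∈ secondOrderOps (d + 1) Nt := by
  have hsum : (fun Ψ => potentialDensity (spaceDeriv d) (symmMatrix e Ψ)) =
      ∑ i, ∑ j, fun Ψ => spaceDeriv d i (spaceDeriv d j (Ψ (e s(i, j)))) := by
    ext1 Ψ
    simp [potentialDensity, divergence_apply, rowDivergence_apply, symmMatrix]
  exact hsum ▸ sum_mem fun i _ => sum_mem fun j _ => smoothPdv_smoothPdv_mem_secondOrderOps _ _ _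

theorem potentialMomentum_mem_secondOrderOps (i : Fin d) :
    (fun Ψ => potentialMomentum (timeDeriv d) (spaceDeriv d) (symmMatrix e Ψ) i) ∈
      secondOrderOps (d + 1) Nt := by
  have hsum : (fun Ψ => potentialMomentum (timeDeriv d) (spaceDeriv d) (symmMatrix e Ψ) i) =
      -∑ j, fun Ψ => timeDeriv d (spaceDeriv d j (Ψ (e s(i, j)))) := by
    ext1 Ψ
    simp [potentialMomentum, rowDivergence_apply, symmMatrix]
  exact hsum ▸ neg_mem (sum_mem fun j _ => smoothPdv_smoothPdv_mem_secondOrderOps _ _ _)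

theorem potentialFlux_mem_secondOrderOps (i j : Fin d) :
    (fun Ψ => potentialFlux (timeDeriv d) (symmMatrix e Ψ) i j) ∈ secondOrderOps (d + 1) Nt :=
  smoothPdv_smoothPdv_mem_secondOrderOps (Fin.last d) (Fin.last d) (e s(i, j))

theorem meanTrace_potentialFlux_mem_secondOrderOps :
    (fun Ψ => meanTrace ℝ (potentialFlux (timeDeriv d) (symmMatrix e Ψ))) ∈
      secondOrderOps (d + 1) Nt := by
  have hsum : (fun Ψ => meanTrace ℝ (potentialFlux (timeDeriv d) (symmMatrix e Ψ))) =
      (Fintype.card (Fin d) : ℝ)⁻¹ •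
        ∑ i, fun Ψ => potentialFlux (timeDeriv d) (symmMatrix e Ψ) i i := by
    ext1 Ψ
    simp [meanTrace, Matrix.trace]
  exact hsum ▸ Submodule.smul_mem _ _ (sum_mem fun i _ => potentialFlux_mem_secondOrderOps e i i)

theorem deviator_potentialFlux_mem_secondOrderOps (i j : Fin d) :
    (fun Ψ => deviator ℝ (potentialFlux (timeDeriv d) (symmMatrix e Ψ)) i j) ∈
      secondOrderOps (d + 1) Nt := by
  obtain rfl | hij := eq_or_ne i j
  · simp only [deviator, Matrix.sub_apply, Matrix.diagonal_apply_eq]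
    exact sub_mem (potentialFlux_mem_secondOrderOps e i i)
      (meanTrace_potentialFlux_mem_secondOrderOps e)
  · simpa [deviator, hij] using potentialFlux_mem_secondOrderOps e i j

end Euler

theorem succ_choose_two_le_sq {d : ℕ} (hd : 3 ≤ d) :
    (d + 1).choose 2 ≤ (d * (d - 1) / 2) ^ 2 := by
  have hle : d ≤ d * (d - 1) / 2 := by
    rw [Nat.le_div_iff_mul_le two_pos]
    exact Nat.mul_le_mul_left d (by lia)
  calc (d + 1).choose 2 = (d + 1) * d / 2 := Nat.choose_two_right (d + 1)
    _ ≤ d ^ 2 := Nat.div_le_of_le_mul (by nlinarith)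
    _ ≤ (d * (d - 1) / 2) ^ 2 := Nat.pow_le_pow_left hle 2


theorem linearized_euler_has_second_order_potential_general
    (d Nt : ℕ) (hd : d ≠ 0) (hNt : (d + 1).choose 2 ≤ Nt) :
    ∃ (Cρ : Fin (d + 1) → Fin (d + 1) → Fin Nt → ℝ)
      (Cm : Fin (d + 1) → Fin (d + 1) → Fin d → Fin Nt → ℝ)
      (CM : Fin (d + 1) → Fin (d + 1) → Fin d → Fin d → Fin Nt → ℝ)
      (Cq : Fin (d + 1) → Fin (d + 1) → Fin Nt → ℝ),
      (∀ ψ : EuclideanSpace ℝ (Fin (d + 1)) → Fin Nt → ℝ,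
        ContDiff ℝ (⊤ : ℕ∞) ψ →
          (∀ x i j, applyOp2 (fun a b s => CM a b i j s) ψ x =
            applyOp2 (fun a b s => CM a b j i s) ψ x) ∧
          (∀ x, ∑ i : Fin d, applyOp2 (fun a b s => CM a b i i s) ψ x = 0) ∧
          EulerLin (fun x => applyOp2 Cρ ψ x)
            (fun x j => applyOp2 (fun a b s => Cm a b j s) ψ x)
            (fun x i j => applyOp2 (fun a b s => CM a b i j s) ψ x)
            (fun x => applyOp2 Cq ψ x)) ∧
      (∀ (ρ : EuclideanSpace ℝ (Fin (d + 1)) → ℝ)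
        (m : EuclideanSpace ℝ (Fin (d + 1)) → Fin d → ℝ)
        (M : EuclideanSpace ℝ (Fin (d + 1)) → Fin d → Fin d → ℝ)
        (q : EuclideanSpace ℝ (Fin (d + 1)) → ℝ),
        ContDiff ℝ (⊤ : ℕ∞) ρ → ContDiff ℝ (⊤ : ℕ∞) m → ContDiff ℝ (⊤ : ℕ∞) M →
        ContDiff ℝ (⊤ : ℕ∞) q →
        (∀ x i j, M x i j = M x j i) → (∀ x, ∑ i : Fin d, M x i i = 0) →
        EulerLin ρ m M q →
        ∃ ψ : EuclideanSpace ℝ (Fin (d + 1)) → Fin Nt → ℝ,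
          ContDiff ℝ (⊤ : ℕ∞) ψ ∧
          (∀ x, ρ x = applyOp2 Cρ ψ x) ∧
          (∀ x j, m x j = applyOp2 (fun a b s => Cm a b j s) ψ x) ∧
          (∀ x i j, M x i j = applyOp2 (fun a b s => CM a b i j s) ψ x) ∧
          (∀ x, q x = applyOp2 Cq ψ x)) := by
  have : NeZero d := ⟨hd⟩
  obtain ⟨e⟩ : Nonempty (Sym2 (Fin d) ↪ Fin Nt) :=
    Function.Embedding.nonempty_of_card_le (by simpa [Sym2.card] using hNt)
  obtain ⟨Cρ, hCρ⟩ := mem_secondOrderOps.1 (potentialDensity_mem_secondOrderOps e)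
  choose Cm hCm using fun j => mem_secondOrderOps.1 (potentialMomentum_mem_secondOrderOps e j)
  choose CM hCM using fun i j =>
    mem_secondOrderOps.1 (deviator_potentialFlux_mem_secondOrderOps e i j)
  obtain ⟨Cq, hCq⟩ := mem_secondOrderOps.1 (meanTrace_potentialFlux_mem_secondOrderOps e)
  refine ⟨Cρ, fun a b j => Cm j a b, fun a b i j => CM i j a b, Cq, fun ψ hψ => ?_,
    fun ρ m M q hρ hm hM hq hsymm htr hE => ?_⟩
  · obtain ⟨Ψ, rfl⟩ := smoothFunctions.exists_family_eq hψ
    have hsymm := isSymm_deviator (K := ℝ)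
      (isSymm_potentialFlux (T := timeDeriv d) (isSymm_symmMatrix e Ψ))
    have htr := trace_deviator (K := ℝ) (potentialFlux (timeDeriv d) (symmMatrix e Ψ))
    simp only [← hCρ, ← hCm, ← hCM, ← hCq]
    exact ⟨fun x i j => congrFun (congrArg Subtype.val (hsymm.apply j i)) x,
      fun x => by rw [← smoothFunctions.sum_apply]; exact congrFun (congrArg Subtype.val htr) x,
      eulerLin_potential (symmMatrix e Ψ)⟩
  · lift ρ to smoothFunctions (d + 1) using smoothFunctions.mem_iff.2 hρ
    lift q to smoothFunctions (d + 1) using smoothFunctions.mem_iff.2 hq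
    obtain ⟨m, rfl⟩ := smoothFunctions.exists_family_eq hm
    obtain ⟨M, rfl⟩ := smoothFunctions.exists_matrix_eq hM
    obtain ⟨S, hS, rfl, rfl, rfl, rfl⟩ := EulerLin.exists_potential
      (Matrix.ext fun i j => Subtype.ext (funext fun x => hsymm x j i))
      (Subtype.ext (funext fun x => by rw [Matrix.trace, smoothFunctions.sum_apply]; exact htr x))
      hE
    obtain ⟨Ψ, rfl⟩ := exists_symmMatrix_eq e.injective hS
    exact ⟨fun x s => (Ψ s).1 x, contDiff_pi.2 fun s => smoothFunctions.contDiff (Ψ s),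
      hCρ Ψ, fun x j => hCm j Ψ x, fun x i j => hCM i j Ψ x, hCq Ψ⟩

/-- for `d ≥ 3` the linearized isentropic Euler operator `𝓐` on
`ℝ^{d+1}` has a second-order homogeneous constant-coefficient potential
`𝓑 : C^∞(ℝ^{d+1}, ℝ^{Ñ}) → C^∞(ℝ^{d+1}, ℝ × ℝ^d × S_0^d × ℝ)`, `Ñ = ((d-1)d/2)²`,
with `ker 𝓐 = im 𝓑` on smooth functions. -/
theorem linearized_euler_has_second_order_potential
    (d : ℕ) (hd : 3 ≤ d) :
    ∃ (Cρ : Fin (d + 1) → Fin (d + 1) → Fin ((d * (d - 1) / 2) ^ 2) → ℝ)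
      (Cm : Fin (d + 1) → Fin (d + 1) → Fin d → Fin ((d * (d - 1) / 2) ^ 2) → ℝ)
      (CM : Fin (d + 1) → Fin (d + 1) → Fin d → Fin d → Fin ((d * (d - 1) / 2) ^ 2) → ℝ)
      (Cq : Fin (d + 1) → Fin (d + 1) → Fin ((d * (d - 1) / 2) ^ 2) → ℝ),
      -- the image of 𝓑 consists of smooth solutions of 𝓐z = 0 taking values in
      -- ℝ × ℝ^d × S_0^d × ℝ
      (∀ ψ : EuclideanSpace ℝ (Fin (d + 1)) → Fin ((d * (d - 1) / 2) ^ 2) → ℝ,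
        ContDiff ℝ (⊤ : ℕ∞) ψ →
          (∀ x i j, applyOp2 (fun a b s => CM a b i j s) ψ x =
            applyOp2 (fun a b s => CM a b j i s) ψ x) ∧
          (∀ x, ∑ i : Fin d, applyOp2 (fun a b s => CM a b i i s) ψ x = 0) ∧
          EulerLin (fun x => applyOp2 Cρ ψ x)
            (fun x j => applyOp2 (fun a b s => Cm a b j s) ψ x)
            (fun x i j => applyOp2 (fun a b s => CM a b i j s) ψ x)
            (fun x => applyOp2 Cq ψ x)) ∧
      -- every smooth solution of 𝓐z = 0 lies in the image of 𝓑
      (∀ (ρ : EuclideanSpace ℝ (Fin (d + 1)) → ℝ)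
        (m : EuclideanSpace ℝ (Fin (d + 1)) → Fin d → ℝ)
        (M : EuclideanSpace ℝ (Fin (d + 1)) → Fin d → Fin d → ℝ)
        (q : EuclideanSpace ℝ (Fin (d + 1)) → ℝ),
        ContDiff ℝ (⊤ : ℕ∞) ρ → ContDiff ℝ (⊤ : ℕ∞) m → ContDiff ℝ (⊤ : ℕ∞) M → ContDiff ℝ (⊤ : ℕ∞) q →
        (∀ x i j, M x i j = M x j i) → (∀ x, ∑ i : Fin d, M x i i = 0) →
        EulerLin ρ m M q →
        ∃ ψ : EuclideanSpace ℝ (Fin (d + 1)) → Fin ((d * (d - 1) / 2) ^ 2) → ℝ,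
          ContDiff ℝ (⊤ : ℕ∞) ψ ∧
          (∀ x, ρ x = applyOp2 Cρ ψ x) ∧
          (∀ x j, m x j = applyOp2 (fun a b s => Cm a b j s) ψ x) ∧
          (∀ x i j, M x i j = applyOp2 (fun a b s => CM a b i j s) ψ x) ∧
          (∀ x, q x = applyOp2 Cq ψ x)) := by
  exact linearized_euler_has_second_order_potential_general d _ (by lia)
    (succ_choose_two_le_sq hd)
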